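/- Let k be a field and let ν be the valuation on the polynomial ring k[x,y] defined by ν(p) := ord_t(p(t, y₀)), where y₀ := Σ_{i=1}^∞ t^{i²} ∈ k((t^ℚ)) and ord_t is the canonical valuation of the Hahn series field k((t^ℚ)) (the minimum of the support). Then for every nonzero p ∈ k[x,y] there exist n₀ ∈ ℕ and a nonzero a ∈ k such that ν(p) = n₀ and ν(p − a·x^{n₀}) > n₀. In particular, the set {x} satisfies (GS3) for ν: the initial form of x generates the associated graded algebra of ν over k. -/

import Mathlib

open Polynomial

/-- The element `t ∈ k((t^ℚ))` (the Hahn series field over `k` with value group `ℚ`). -/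
noncomputable def tt (k : Type*) [Field k] : HahnSeries ℚ k := HahnSeries.single (1 : ℚ) 1

open Classical in
/-- The element `y₀ = Σ_{i≥1} t^(i²) = t + t⁴ + t⁹ + t¹⁶ + ⋯ ∈ k((t^ℚ))`. -/
noncomputable def y0 (k : Type*) [Field k] : HahnSeries ℚ k :=
  HahnSeries.ofPowerSeries ℚ k
    (PowerSeries.mk fun n => if ∃ i : ℕ, 1 ≤ i ∧ n = i ^ 2 then (1 : k) else 0)

/-- The valuation `ν` on `k[x,y]` induced by `x ↦ t`, `y ↦ y₀` and the canonical valuation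
`ord_t` (`HahnSeries.orderTop`, the minimum of the support) of `k((t^ℚ))`. -/
noncomputable def nuEx (k : Type*) [Field k] (p : MvPolynomial (Fin 2) k) : WithTop ℚ :=
  (MvPolynomial.aeval ![tt k, y0 k] p).orderTop

open Classical in
/-- The power series `∑_{i ≥ 1} X ^ (i ^ 2)`. -/
noncomputable def squareSeries (R : Type*) [CommRing R] : PowerSeries R :=
  PowerSeries.mk fun n => if ∃ i : ℕ, 1 ≤ i ∧ n = i ^ 2 then (1 : R) else 0

theorem map_squareSeries {R S : Type*} [CommRing R] [CommRing S] (f : R →+* S) :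
    PowerSeries.map f (squareSeries R) = squareSeries S := by
  ext n
  simp [squareSeries, apply_ite f]

theorem IsAlgebraic.not_linearIndependent_pow {A B : Type*} [CommRing A] [IsDomain A] [CommRing B]
    [Algebra A B] {y : B} (hy : IsAlgebraic A y) (f : ℕ → ℕ) :
    ¬ LinearIndependent A fun j => y ^ f j := by
  intro h
  obtain ⟨a, ha, hint⟩ := hy.exists_integral_multiple
  have hli : LinearIndependent A fun j => (a • y) ^ f j := by
    rw [linearIndependent_iff'] at h ⊢
    intro s g hg i hi
    have := h s (fun j => g j * a ^ f j) (by simpa [_root_.smul_pow, mul_smul] using hg) i hi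
    exact (mul_eq_zero.mp this).resolve_right (pow_ne_zero _ ha)
  obtain ⟨S, hS⟩ := hint.fg_adjoin_singleton
  have hfin : Finite ℕ := by
    refine hli.finite_of_le_span_finite _ (S : Set B) ?_
    rw [hS]
    rintro _ ⟨j, rfl⟩
    exact pow_mem (Algebra.self_mem_adjoin_singleton A (a • y)) _
  exact not_finite ℕ

open Classical in
theorem coeff_squareSeries_pow {R : Type*} [CommRing R] (p : ℕ) [Fact p.Prime] [CharP R p]
    (j n : ℕ) : PowerSeries.coeff n (squareSeries R ^ p ^ (2 * j)) =
      if ∃ i : ℕ, 1 ≤ i ∧ n = (i * p ^ j) ^ 2 then 1 else 0 := by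
  have hp : p.Prime := Fact.out
  have : ExpChar R p := ExpChar.prime hp
  have h : squareSeries R ^ p ^ (2 * j) = PowerSeries.expand (p ^ (2 * j))
      (pow_ne_zero _ hp.ne_zero) (squareSeries R) := by
    conv_rhs => rw [← map_squareSeries (iterateFrobenius R p (2 * j)), ← PowerSeries.map_expand]
    exact (MvPowerSeries.map_iterateFrobenius_expand p hp.ne_zero (squareSeries R) (2 * j)).symm
  have hpow (i : ℕ) : (i * p ^ j) ^ 2 = p ^ (2 * j) * i ^ 2 := by ring
  rw [h]
  by_cases hd : p ^ (2 * j) ∣ n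
  · obtain ⟨m, rfl⟩ := hd
    rw [PowerSeries.coeff_expand_mul, squareSeries, PowerSeries.coeff_mk]
    simp only [hpow, Nat.mul_right_inj (pow_ne_zero _ hp.ne_zero)]
  · rw [PowerSeries.coeff_expand_of_not_dvd _ _ _ hd, if_neg]
    rintro ⟨i, -, rfl⟩
    exact hd ⟨i ^ 2, hpow i⟩

theorem exists_coeff_eq_zero_of_mem_adjoin_X {R : Type*} [CommRing R] {f : PowerSeries R}
    (hf : f ∈ Algebra.adjoin R {(PowerSeries.X : PowerSeries R)}) :
    ∃ D : ℕ, ∀ n, D < n → PowerSeries.coeff n f = 0 := by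
  have hle : Algebra.adjoin R {(PowerSeries.X : PowerSeries R)} ≤
      (Polynomial.coeToPowerSeries.algHom (R := R) R).range := by
    rw [Algebra.adjoin_le_iff, Set.singleton_subset_iff]
    exact ⟨Polynomial.X, by simp [Polynomial.coeToPowerSeries.algHom_apply]⟩
  obtain ⟨q, rfl⟩ := hle hf
  refine ⟨q.natDegree, fun n hn => ?_⟩
  simpa [Polynomial.coeToPowerSeries.algHom_apply] using
    Polynomial.coeff_eq_zero_of_natDegree_lt hn

theorem Nat.eq_of_sq_add_eq_sq_add {r s m a D : ℕ} (hr : D < r) (hm : m ≤ D) (ha : a ≤ D)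
    (h : r ^ 2 + m = s ^ 2 + a) : r = s := by
  rcases lt_trichotomy r s with hlt | heq | hlt
  · nlinarith
  · exact heq
  · nlinarith

theorem linearIndependent_squareSeries_pow (k : Type*) [Field k] (p : ℕ) [Fact p.Prime]
    [CharP k p] :
    LinearIndependent (Algebra.adjoin k {(PowerSeries.X : PowerSeries k)})
      fun j : ℕ => squareSeries k ^ p ^ (2 * j) := by
  classical
  have hp : p.Prime := Fact.out
  rw [linearIndependent_iff']
  intro s g hg
  by_contra! hne
  have hex : ∃ j, j ∈ s ∧ g j ≠ 0 := hne
  obtain ⟨hj₀s, hj₀⟩ := Nat.find_spec hex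
  have hmin : ∀ j ∈ s, j < Nat.find hex → g j = 0 := fun j hj hlt => by
    by_contra h
    exact Nat.find_min hex hlt ⟨hj, h⟩
  generalize Nat.find hex = j₀ at *
  choose D hD using fun j => exists_coeff_eq_zero_of_mem_adjoin_X (g j).2
  set E := s.sup D
  have hE : ∀ j ∈ s, ∀ n, PowerSeries.coeff n (g j : PowerSeries k) ≠ 0 → n ≤ E := by
    intro j hj n hn
    by_contra! hlt
    exact hn (hD j n ((Finset.le_sup hj).trans_lt hlt))
  obtain ⟨m, hm⟩ : ∃ m, PowerSeries.coeff m (g j₀ : PowerSeries k) ≠ 0 := by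
    by_contra! h
    exact hj₀ (Subtype.ext (PowerSeries.ext (by simpa using h)))
  obtain ⟨i, hi⟩ : ∃ i, i = p * E + 1 := ⟨_, rfl⟩
  have hpi : ¬ p ∣ i := by
    rw [hi, Nat.dvd_add_right (dvd_mul_right p E)]
    exact hp.not_dvd_one
  have hlarge : E < i * p ^ j₀ := by
    have h1 : 1 ≤ p ^ j₀ := Nat.one_le_pow _ _ hp.pos
    have h2 := hp.one_le
    nlinarith
  have hcoeff := congrArg (PowerSeries.coeff ((i * p ^ j₀) ^ 2 + m)) hg
  have hterm : ∀ j ∈ s, ∀ x ∈ Finset.HasAntidiagonal.antidiagonal ((i * p ^ j₀) ^ 2 + m),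
      PowerSeries.coeff x.1 (g j : PowerSeries k) *
        PowerSeries.coeff x.2 (squareSeries k ^ p ^ (2 * j)) ≠ 0 →
      j = j₀ ∧ x = (m, (i * p ^ j₀) ^ 2) := by
    rintro j hj ⟨a, b⟩ hx hne
    rw [Finset.HasAntidiagonal.mem_antidiagonal] at hx
    dsimp only at hx hne
    obtain ⟨ha, hb⟩ := ne_zero_and_ne_zero_of_mul hne
    rw [coeff_squareSeries_pow] at hb
    obtain ⟨l, -, rfl⟩ : ∃ l, 1 ≤ l ∧ b = (l * p ^ j) ^ 2 := by
      by_contra h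
      exact hb (if_neg h)
    have heq : i * p ^ j₀ = l * p ^ j :=
      Nat.eq_of_sq_add_eq_sq_add hlarge (hE j₀ hj₀s m hm) (hE j hj a ha) (by omega)
    have hle : j₀ ≤ j := by
      by_contra! hlt
      refine ha ?_
      simp [hmin j hj hlt]
    have hjj : j = j₀ := by
      obtain ⟨e, rfl⟩ := Nat.exists_eq_add_of_le hle
      rcases e with _ | e
      · rfl
      · refine absurd ⟨l * p ^ e, ?_⟩ hpi
        refine Nat.eq_of_mul_eq_mul_right (pow_pos hp.pos j₀) ?_
        rw [heq]
        ring
    refine ⟨hjj, ?_⟩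
    rw [← heq] at hx ⊢
    rw [Prod.mk.injEq]
    exact ⟨by omega, rfl⟩
  simp only [Subalgebra.smul_def, smul_eq_mul, map_sum, map_zero, PowerSeries.coeff_mul] at hcoeff
  rw [Finset.sum_eq_single_of_mem j₀ hj₀s, Finset.sum_eq_single_of_mem (m, (i * p ^ j₀) ^ 2),
    coeff_squareSeries_pow, if_pos ⟨i, by omega, rfl⟩, mul_one] at hcoeff
  · exact hm hcoeff
  · simp [add_comm]
  · intro x hx hxne
    by_contra h
    exact hxne (hterm j₀ hj₀s x hx h).2
  · intro j hj hjne
    refine Finset.sum_eq_zero fun x hx => ?_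
    by_contra h
    exact hjne (hterm j hj x hx h).1

theorem algebraicIndependent_squareSeries_of_charP (k : Type*) [Field k] (p : ℕ) [Fact p.Prime]
    [CharP k p] :
    AlgebraicIndependent k ![(PowerSeries.X : PowerSeries k), squareSeries k] := by
  rw [AlgebraicIndependent.iff_transcendental_adjoin_image 1]
  constructor
  · have : Unique {j : Fin 2 // j ≠ 1} :=
      ⟨⟨⟨0, by decide⟩⟩, fun ⟨j, hj⟩ => Subtype.ext (by
        change j = 0
        omega)⟩
    rw [algebraicIndependent_unique_type_iff]
    have hdefault : (default : {j : Fin 2 // j ≠ 1}) = ⟨0, by decide⟩ := Subsingleton.elim _ _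
    rw [hdefault]
    change Transcendental k (PowerSeries.X : PowerSeries k)
    rw [transcendental_iff_injective]
    have : (Polynomial.aeval (PowerSeries.X : PowerSeries k)) =
        Polynomial.coeToPowerSeries.algHom (R := k) k := by
      ext
      simp [Polynomial.coeToPowerSeries.algHom_apply]
    rw [this]
    intro a b hab
    simpa [Polynomial.coeToPowerSeries.algHom_apply] using hab
  · have himage : ![(PowerSeries.X : PowerSeries k), squareSeries k] '' {1}ᶜ =
        {PowerSeries.X} := by
      have : ({1}ᶜ : Set (Fin 2)) = {0} := by
        ext j
        fin_cases j <;> simp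
      simp [this]
    rw [himage]
    exact fun h => h.not_linearIndependent_pow _ (linearIndependent_squareSeries_pow k p)

theorem coeff_aeval_squareSeries {R : Type*} [CommRing R] {ι : Type*} [Fintype ι]
    (e : ι → Fin 2 →₀ ℕ) (c : ι → R) (n : ℕ) :
    PowerSeries.coeff n (MvPolynomial.aeval ![PowerSeries.X, squareSeries R]
      (∑ i, MvPolynomial.monomial (e i) (c i))) =
    ∑ i, c i * (PowerSeries.coeff n
      (PowerSeries.X ^ e i 0 * squareSeries ℤ ^ e i 1) : ℤ) := by
  rw [map_sum, map_sum]
  refine Finset.sum_congr rfl fun i _ => ?_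
  rw [MvPolynomial.aeval_monomial, ← Algebra.smul_def, PowerSeries.coeff_smul, smul_eq_mul,
    Finsupp.prod_fintype _ _ (by simp)]
  congr 1
  rw [← map_squareSeries (Int.castRingHom R), ← eq_intCast (Int.castRingHom R),
    ← PowerSeries.coeff_map]
  simp

theorem exists_int_relations {k ι : Type*} [Field k] [CharZero k] [Fintype ι] (c : ι → k) {i₀ : ι}
    (h : c i₀ ≠ 0) : ∃ d : ι → ℤ, d i₀ ≠ 0 ∧
      ∀ m : ι → ℤ, ∑ i, c i * m i = 0 → ∑ i, d i * m i = 0 := by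
  classical
  let T : (ι → ℤ) →ₗ[ℤ] k := Fintype.linearCombination ℤ c
  have hne : T.rangeRestrict (Pi.single i₀ 1) ≠ 0 := by
    intro h0
    apply h
    simpa [T] using congrArg Subtype.val h0
  rw [Ne, ← Module.forall_dual_apply_eq_zero_iff ℤ] at hne
  push Not at hne
  obtain ⟨φ, hφ⟩ := hne
  refine ⟨fun i => φ (T.rangeRestrict (Pi.single i 1)), hφ, fun m hm => ?_⟩
  have hTm : T.rangeRestrict m = 0 := by
    apply Subtype.ext
    simpa [T, Fintype.linearCombination_apply, mul_comm] using hm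
  have := (φ ∘ₗ T.rangeRestrict).pi_apply_eq_sum_univ m
  simp only [LinearMap.comp_apply, hTm, map_zero, smul_eq_mul] at this
  rw [this]
  refine Finset.sum_congr rfl fun i _ => ?_
  have hsingle : (fun j => if i = j then (1 : ℤ) else 0) = Pi.single i 1 := by
    ext j
    simp [Pi.single_apply, eq_comm]
  rw [mul_comm, hsingle]

theorem algebraicIndependent_squareSeries_of_charZero (k : Type*) [Field k] [CharZero k] :
    AlgebraicIndependent k ![(PowerSeries.X : PowerSeries k), squareSeries k] := by
  rw [algebraicIndependent_iff]
  intro p hp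
  by_contra hne
  obtain ⟨s₀, hs₀⟩ := MvPolynomial.ne_zero_iff.mp hne
  let i₀ : p.support := ⟨s₀, MvPolynomial.mem_support_iff.mpr hs₀⟩
  obtain ⟨d, hd, hrel⟩ := exists_int_relations (fun i : p.support => p.coeff i) (i₀ := i₀) hs₀
  obtain ⟨l, hl, hprime⟩ := Nat.exists_infinite_primes ((d i₀).natAbs + 1)
  have : Fact l.Prime := ⟨hprime⟩
  have hsum : ∑ i : p.support, MvPolynomial.monomial (i : Fin 2 →₀ ℕ) (p.coeff i) = p := by
    rw [Finset.sum_coe_sort p.support fun i => MvPolynomial.monomial i (p.coeff i)]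
    exact p.support_sum_monomial_coeff
  have hq := (algebraicIndependent_iff.mp
    (algebraicIndependent_squareSeries_of_charP (ZMod l) l))
    (∑ i : p.support, MvPolynomial.monomial (i : Fin 2 →₀ ℕ) (d i : ZMod l)) (by
      ext n
      have hn := congrArg (PowerSeries.coeff n) hp
      rw [← hsum, coeff_aeval_squareSeries, map_zero] at hn
      rw [coeff_aeval_squareSeries, map_zero]
      exact_mod_cast congrArg (Int.cast : ℤ → ZMod l) (hrel _ hn))
  have hcoeff := congrArg (MvPolynomial.coeff s₀) hq
  rw [MvPolynomial.coeff_sum, Finset.sum_eq_single i₀, MvPolynomial.coeff_monomial, if_pos rfl,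
    MvPolynomial.coeff_zero, ZMod.intCast_zmod_eq_zero_iff_dvd] at hcoeff
  · have := Int.le_of_dvd (Int.natAbs_pos.mpr hd |> Int.ofNat_lt.mpr) (Int.dvd_natAbs.mpr hcoeff)
    omega
  · intro i _ hi
    rw [MvPolynomial.coeff_monomial, if_neg fun h => hi (Subtype.ext h)]
  · simp

theorem algebraicIndependent_squareSeries (k : Type*) [Field k] :
    AlgebraicIndependent k ![(PowerSeries.X : PowerSeries k), squareSeries k] := by
  obtain ⟨p, hp⟩ := CharP.exists k
  rcases CharP.char_is_prime_or_zero k p with hprime | rfl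
  · have : Fact p.Prime := ⟨hprime⟩
    exact algebraicIndependent_squareSeries_of_charP k p
  · have := CharP.charP_to_charZero k
    exact algebraicIndependent_squareSeries_of_charZero k

theorem nuEx_eq_orderTop_ofPowerSeries {k : Type*} [Field k] (p : MvPolynomial (Fin 2) k) :
    nuEx k p = (HahnSeries.ofPowerSeries ℚ k
      (MvPolynomial.aeval ![PowerSeries.X, squareSeries k] p)).orderTop := by
  rw [nuEx]
  congr 1
  induction p using MvPolynomial.induction_on with
  | C a => rw [MvPolynomial.aeval_C, MvPolynomial.aeval_C, HahnSeries.algebraMap_apply']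
  | add p q hp hq => rw [map_add, map_add, map_add, hp, hq]
  | mul_X p i hp =>
    rw [map_mul, map_mul, map_mul, hp]
    congr 1
    fin_cases i
    · simp [tt]
    · simp [y0, squareSeries]

theorem natCast_le_orderTop_ofPowerSeries {R : Type*} [CommRing R] {f : PowerSeries R} {n : ℕ}
    (h : ∀ m < n, PowerSeries.coeff m f = 0) :
    (n : WithTop ℚ) ≤ (HahnSeries.ofPowerSeries ℚ R f).orderTop := by
  rw [HahnSeries.le_orderTop_iff_forall]
  intro j hj
  by_cases hr : j ∈ Set.range (Nat.castOrderEmbedding : ℕ ↪o ℚ)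
  · obtain ⟨m, rfl⟩ := hr
    have hmn : m < n := by
      simp only [Nat.castOrderEmbedding_apply] at hj
      exact_mod_cast hj
    exact (HahnSeries.ofPowerSeries_apply_coeff f m).trans (h m hmn)
  · rw [HahnSeries.ofPowerSeries_apply, HahnSeries.embDomain_of_notMem_range hr]

/-- Example in Section 3.  Let `k` be a field and `ν` the valuation on
`k[x,y]` given by `ν p = ord_t (p (t, y₀))` where `y₀ = Σ_{i≥1} t^(i²) ∈ k((t^ℚ))`.  Then
for every nonzero `p ∈ k[x,y]` there exist `n₀ ∈ ℕ` and a nonzero `a ∈ k` with `ν p = n₀`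
and `ν (p - a • x^n₀) > n₀`.  (In particular `{x}` satisfies (GS3) for `ν`: the initial
form of `x` generates the graded algebra of `ν` over `k`.) -/
theorem example_GS3 (k : Type*) [Field k] :
    ∀ p : MvPolynomial (Fin 2) k, p ≠ 0 →
      ∃ (n₀ : ℕ) (a : k), a ≠ 0 ∧ nuEx k p = (n₀ : WithTop ℚ) ∧
        (n₀ : WithTop ℚ) <
          nuEx k (p - MvPolynomial.C a * MvPolynomial.X 0 ^ n₀) := by
  classical
  intro p hp
  simp only [nuEx_eq_orderTop_ofPowerSeries]
  obtain ⟨f, hf⟩ : ∃ f, f = MvPolynomial.aeval ![PowerSeries.X, squareSeries k] p := ⟨_, rfl⟩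
  have hex : ∃ n, PowerSeries.coeff n f ≠ 0 := by
    by_contra! h
    refine hp (algebraicIndependent_iff.mp (algebraicIndependent_squareSeries k) p ?_)
    rw [← hf]
    exact PowerSeries.ext (by simpa using h)
  have hmin : ∀ m < Nat.find hex, PowerSeries.coeff m f = 0 := fun m hm =>
    not_not.mp (Nat.find_min hex hm)
  refine ⟨Nat.find hex, PowerSeries.coeff (Nat.find hex) f, Nat.find_spec hex, ?_, ?_⟩
  · rw [← hf]
    refine le_antisymm (HahnSeries.orderTop_le_of_coeff_ne_zero (g := ((Nat.find hex : ℕ) : ℚ)) ?_)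
      (natCast_le_orderTop_ofPowerSeries hmin)
    rw [HahnSeries.ofPowerSeries_apply_coeff]
    exact Nat.find_spec hex
  · refine lt_of_lt_of_le ?_ (natCast_le_orderTop_ofPowerSeries (n := Nat.find hex + 1) ?_)
    · exact_mod_cast Nat.lt_succ_self (Nat.find hex)
    · intro m hm
      rcases Nat.lt_succ_iff_lt_or_eq.mp hm with hlt | rfl
      · simp [← hf, hmin m hlt, PowerSeries.coeff_X_pow, hlt.ne]
      · simp [← hf, PowerSeries.coeff_X_pow]
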